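/- (Macaulay's bound) For every set V of monomials of degree d in K[x_1,…,x_n] one has |MV| ≥ |V|^{<n−1>}. -/

import Mathlib

/-!
The proof is by double induction, on the number of variables and on the degree, after a
compression that makes `V` stable with respect to `x_0`.

*Compression.* Fix `j ≠ 0` and group the monomials of one degree by their exponents outside
`x_0, x_j`. In each group replace the members of `V` by equally many members with the smallest
possible `x_0`-exponents. This preserves `|V|` and does not enlarge `MV`: after the replacement
all contributions to a group of `MV` are nested, so that their union is as large as the largest
one, and for nonempty sets of monomials in two variables `|MV| ≥ |V| + 1` (`card_shad_push_le`). The total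
`x_0`-exponent drops until `x_0 m ∈ V` implies `x_j m ∈ V` for all `j` (`exists_stable`).

*Induction.* For stable `V` write `V = A ⊔ x_0 B`, with `A` free of `x_0`. Then `MB ⊆ V`, hence
`|B|^{<n-1>} ≤ |V|` by induction on the degree; and `MV ⊇ x_0 V ⊔ MA`, hence
`|MV| ≥ |V| + |A|^{<n-2>}` by induction on the number of variables.

*Numerics.* With `h = |V|` and `q = |B|`, it remains to see that `q^{<k+1>} ≤ h` implies
`h^{<k+1>} ≤ h + (h - q)^{<k>}`. This is `macUp_succ_le`, proved by induction on `k` by removing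
the leading binomial coefficients from `h` and `q`; it uses that `h ↦ h^{<k>}` is monotone and
that `h^{<k+1>} - h ≤ C(a, k)` for `h ≤ C(a, k+1)`.
-/

open Finset

/-- `macUp n h` is `h^{<n>}`, computed via the greedy (Macaulay) binomial
representation `h = C(a_n, n) + C(a_{n-1}, n-1) + ⋯` (equivalently
`h = C(h(n)+n, n) + ⋯ + C(h(i)+i, i)` with `h(n) ≥ ⋯ ≥ h(i) ≥ 0`), giving
`h^{<n>} = C(a_n+1, n) + C(a_{n-1}+1, n-1) + ⋯`; `macUp n 0 = 0`, `macUp 0 1 = 1`. -/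
def macUp : ℕ → ℕ → ℕ
  | 0, h => h
  | n+1, h =>
    if h = 0 then 0
    else
      let a := Nat.findGreatest (fun a => Nat.choose a (n+1) ≤ h) (h + n + 1)
      Nat.choose (a+1) (n+1) + macUp n (h - Nat.choose a (n+1))

/-- Monomials in `K[x_1,…,x_n]` are identified with their exponent vectors
`Fin n → ℕ`; the degree of `v` is `∑ i, v i`.  `shad V` is the set
`MV = {x_j v : v ∈ V, 1 ≤ j ≤ n}`. -/
def shad {n : ℕ} (V : Finset (Fin n → ℕ)) : Finset (Fin n → ℕ) :=
  (Finset.univ ×ˢ V).image fun p => p.2 + Pi.single p.1 1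

/-! ### The numerical function `macUp` -/

theorem macUp_zero_right (k : ℕ) : macUp k 0 = 0 := by
  cases k <;> simp [macUp]

theorem lt_choose_add (h k : ℕ) : h < Nat.choose (h+k+1) (k+1) := by
  induction h with
  | zero => simp
  | succ h ih =>
    have e := Nat.choose_succ_succ' (h+k+1) k
    have : 0 < Nat.choose (h+k+1) k := Nat.choose_pos (by omega)
    rw [show h + 1 + k + 1 = h + k + 1 + 1 by omega]
    omega

/-- The leading term of the binomial representation: any `a` with
`C(a, k+1) ≤ h < C(a+1, k+1)` is the one found by the greedy search. -/
theorem macUp_succ {k a h : ℕ} (h0 : 0 < h) (h1 : Nat.choose a (k+1) ≤ h)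
    (h2 : h < Nat.choose (a+1) (k+1)) :
    macUp (k+1) h = Nat.choose (a+1) (k+1) + macUp k (h - Nat.choose a (k+1)) := by
  have key : Nat.findGreatest (fun a => Nat.choose a (k+1) ≤ h) (h + k + 1) = a := by
    rw [Nat.findGreatest_eq_iff]
    refine ⟨?_, fun _ => h1, ?_⟩
    · by_contra! hc
      -- `C(h+k+1, k+1)` already exceeds `h`, so the search range is large enough.
      have h3 : Nat.choose (h+k+1) (k+1) ≤ h := (Nat.choose_le_choose _ hc.le).trans h1
      have h4 := lt_choose_add h k
      omega
    · intro m hm _ hc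
      have := Nat.choose_le_choose (k+1) (show a + 1 ≤ m from hm)
      omega
  rw [macUp]
  simp only [h0.ne', if_false, key]

theorem exists_lead (k : ℕ) {h : ℕ} (h0 : 0 < h) :
    ∃ a, k + 1 ≤ a ∧ Nat.choose a (k+1) ≤ h ∧ h < Nat.choose (a+1) (k+1) := by
  have hex : ∃ m, h < Nat.choose (m+1) (k+1) :=
    ⟨h + k, lt_choose_add h k⟩
  classical
  have hs := Nat.find_spec hex
  have hmin : ∀ m < Nat.find hex, Nat.choose (m+1) (k+1) ≤ h := fun m hm =>
    not_lt.1 (Nat.find_min hex hm)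
  generalize Nat.find hex = a at hs hmin
  have hka : k + 1 ≤ a := by
    by_contra! hc
    have := Nat.choose_le_choose (k+1) (show a + 1 ≤ k + 1 from hc)
    rw [Nat.choose_self] at this
    omega
  refine ⟨a, hka, ?_, hs⟩
  have := hmin (a-1) (by omega)
  rwa [Nat.sub_add_cancel (by omega)] at this

theorem macUp_choose {k a : ℕ} (ha : k ≤ a) :
    macUp k (Nat.choose a k) = Nat.choose (a+1) k := by
  cases k with
  | zero => simp [macUp]
  | succ k =>
    have hp : 0 < Nat.choose a k := Nat.choose_pos (by omega)
    have hq : 0 < Nat.choose a (k+1) := Nat.choose_pos ha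
    have hs := Nat.choose_succ_succ' a k
    rw [macUp_succ (a := a) hq le_rfl (by omega)]
    simp [macUp_zero_right]

theorem le_macUp (k h : ℕ) : h ≤ macUp k h := by
  induction k generalizing h with
  | zero => simp [macUp]
  | succ k ih =>
    rcases Nat.eq_zero_or_pos h with rfl | h0
    · simp
    obtain ⟨a, _, h1, h2⟩ := exists_lead k h0
    rw [macUp_succ h0 h1 h2]
    have := ih (h - Nat.choose a (k+1))
    have := Nat.choose_le_choose (k+1) (Nat.le_succ a)
    simp only [Nat.succ_eq_add_one] at this
    omega

theorem macUp_one {h : ℕ} (h0 : 0 < h) : macUp 1 h = h + 1 := by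
  rw [macUp_succ (a := h) h0 (by simp) (by simp)]
  simp [macUp]

/-- The increment `macUp (k+1) h - h` is at most its value `C(a, k)` at any
binomial coefficient `C(a, k+1) ≥ h`. -/
theorem macUp_le_add_choose {k a h : ℕ} (hh : h ≤ Nat.choose a (k+1)) :
    macUp (k+1) h ≤ h + Nat.choose a k := by
  induction k generalizing a h with
  | zero =>
    rcases Nat.eq_zero_or_pos h with rfl | h0
    · simp [macUp_zero_right]
    · simp [macUp_one h0]
  | succ k ih =>
    rcases Nat.eq_zero_or_pos h with rfl | h0
    · simp [macUp_zero_right]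
    rcases hh.eq_or_lt with rfl | hlt
    · have ha : k + 2 ≤ a := by
        by_contra! hc
        rw [Nat.choose_eq_zero_of_lt hc] at h0
        omega
      rw [macUp_choose ha, Nat.choose_succ_succ' a (k+1), Nat.add_comm]
    obtain ⟨b, _, h1, h2⟩ := exists_lead (k+1) h0
    have hba : b + 1 ≤ a := by
      by_contra! hc
      have := Nat.choose_le_choose (k+1+1) (show a ≤ b by omega)
      omega
    rw [macUp_succ h0 h1 h2]
    have e1 := Nat.choose_succ_succ' b (k+1)
    have e2 := Nat.choose_succ_succ' b k
    have e3 := Nat.choose_le_choose (k+1) hba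
    have := ih (a := b) (h := h - Nat.choose b (k+1+1)) (by omega)
    omega

theorem macUp_mono (k : ℕ) : Monotone (macUp k) := by
  induction k with
  | zero => intro x y h; simpa [macUp] using h
  | succ k ih =>
    intro x y hxy
    rcases Nat.eq_zero_or_pos x with rfl | h0
    · simp [macUp_zero_right]
    obtain ⟨a, _, h1, h2⟩ := exists_lead k h0
    obtain ⟨b, _, h3, h4⟩ := exists_lead k (h0.trans_le hxy)
    have hab : a ≤ b := by
      by_contra! hc
      have := Nat.choose_le_choose (k+1) (show b + 1 ≤ a from hc)
      omega
    rw [macUp_succ (h0.trans_le hxy) h3 h4]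
    rcases hab.eq_or_lt with rfl | hlt
    · rw [macUp_succ h0 h1 h2]
      have := ih (show x - Nat.choose a (k+1) ≤ y - Nat.choose a (k+1) by omega)
      omega
    · have := macUp_le_add_choose h2.le
      have e1 := Nat.choose_succ_succ' (a+1) k
      have e2 := Nat.choose_le_choose (k+1) (show a + 1 + 1 ≤ b + 1 by omega)
      omega

/-- Peeling off a binomial coefficient that need not be the greedy one; the boundary case
`t = C(b, k)`, where `C(b, k+1) + t` has leading index `b+1`, is allowed. -/
theorem choose_add_macUp_le {k b t : ℕ} (hb : k + 1 ≤ b) (ht : t ≤ Nat.choose b k) :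
    Nat.choose (b+1) (k+1) + macUp k t ≤ macUp (k+1) (Nat.choose b (k+1) + t) := by
  have e := Nat.choose_succ_succ' b k
  have hp : 0 < Nat.choose b (k+1) := Nat.choose_pos hb
  rcases ht.eq_or_lt with rfl | hlt
  · rw [show Nat.choose b (k+1) + Nat.choose b k = Nat.choose (b+1) (k+1) by omega,
      macUp_choose (by omega), macUp_choose (by omega), Nat.choose_succ_succ' (b+1) k]
    omega
  · rw [macUp_succ (a := b) (by omega) (by omega) (by omega)]
    simp

/-- The numerical heart of the induction: if `q` monomials grow to at most `h`, then the growth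
of `h` is controlled, one level lower, by the growth of `h - q`. -/
theorem macUp_succ_le {k q h : ℕ} (hq : macUp (k+1) q ≤ h) :
    macUp (k+1) h ≤ h + macUp k (h - q) := by
  induction k generalizing q h with
  | zero =>
    rcases Nat.eq_zero_or_pos h with rfl | h0
    · simp [macUp_zero_right]
    rw [macUp_one h0]
    simp only [macUp]
    rcases Nat.eq_zero_or_pos q with rfl | q0
    · omega
    · rw [zero_add, macUp_one q0] at hq
      omega
  | succ k ih =>
    rcases Nat.eq_zero_or_pos h with rfl | h0
    · simp [macUp_zero_right]
    obtain ⟨a, ha, h1, h2⟩ := exists_lead (k+1) h0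
    obtain ⟨b, rfl⟩ : ∃ b, a = b + 1 := ⟨a - 1, by omega⟩
    rw [macUp_succ h0 h1 h2]
    obtain ⟨r, hr⟩ := Nat.exists_eq_add_of_le h1
    rw [show h - Nat.choose (b+1) (k+1+1) = r by omega]
    have e1 := Nat.choose_succ_succ' (b+1) (k+1)
    have e2 := Nat.choose_succ_succ' b (k+1)
    -- The truncated difference `s` covers both the case that `q` has leading index `b`
    -- and the case that its leading index is smaller.
    obtain ⟨s, hs⟩ : ∃ s, s = q - Nat.choose b (k+1+1) := ⟨_, rfl⟩
    have hsr : macUp (k+1) s ≤ r := by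
      rcases Nat.eq_zero_or_pos s with h | spos
      · rw [h, macUp_zero_right]; omega
      have hq2 : q < Nat.choose (b+1) (k+1+1) := by
        by_contra! hc
        have h3 := macUp_mono (k+1+1) hc
        rw [macUp_choose ha] at h3
        omega
      rw [macUp_succ (a := b) (by omega) (by omega) hq2, ← hs] at hq
      omega
    have hsr' : s ≤ r := (le_macUp _ _).trans hsr
    have hmin : macUp (k+1) r ≤ r + macUp k (min (r - s) (Nat.choose b k)) := by
      rcases le_total (r - s) (Nat.choose b k) with hle | hle
      · rw [min_eq_left hle]; exact ih hsr
      · rw [min_eq_right hle, macUp_choose (by omega)]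
        exact macUp_le_add_choose (by omega)
    have hP := choose_add_macUp_le (k := k) (b := b) (by omega)
      (min_le_right (r - s) (Nat.choose b k))
    have hle := min_le_left (r - s) (Nat.choose b k)
    have hM := macUp_mono (k+1)
      (show Nat.choose b (k+1) + min (r - s) (Nat.choose b k) ≤ h - q by omega)
    omega

/-! ### Compression in two variables -/

theorem mem_shad {n : ℕ} {V : Finset (Fin n → ℕ)} {w : Fin n → ℕ} :
    w ∈ shad V ↔ ∃ i, ∃ v ∈ V, v + Pi.single i 1 = w := by
  simp [shad]

section Compression

variable {n : ℕ}

/-- The monomial obtained from `v` by the substitution `x_0 ↦ x_{j+1}`, where `j : Fin n` stands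
for the variable with index `j.succ`, written `x_j` below for short; two monomials have the same
key iff they agree outside the variables `x_0`, `x_j` and have the same degree. -/
def key (j : Fin n) (v : Fin (n+1) → ℕ) : Fin (n+1) → ℕ :=
  Function.update (Function.update v j.succ (v j.succ + v 0)) 0 0

/-- The number of monomials of `V` with the same key as `v` and a smaller `x_0`-exponent. -/
def keyRank (V : Finset (Fin (n+1) → ℕ)) (j : Fin n) (v : Fin (n+1) → ℕ) : ℕ :=
  (V.filter fun w => key j w = key j v ∧ w 0 < v 0).card

/-- The compression of `v` in `V`: within its key class, `v` is moved so that its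
`x_0`-exponent becomes its rank. -/
def push (V : Finset (Fin (n+1) → ℕ)) (j : Fin n) (v : Fin (n+1) → ℕ) : Fin (n+1) → ℕ :=
  Function.update (Function.update v j.succ (v j.succ + v 0 - keyRank V j v)) 0 (keyRank V j v)

theorem key_inj {j : Fin n} {v w : Fin (n+1) → ℕ} (h : key j v = key j w) (h0 : v 0 = w 0) :
    v = w := by
  funext i
  have hi := congrFun h i
  by_cases hi0 : i = 0
  · rw [hi0, h0]
  by_cases hij : i = j.succ
  · subst hij
    simp [key] at hi
    omega
  · simpa [key, hi0, hij] using hi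

theorem key_add (j : Fin n) (v : Fin (n+1) → ℕ) (i : Fin (n+1)) :
    key j (v + Pi.single i 1) = key j v + Pi.single (if i = 0 then j.succ else i) 1 := by
  funext l
  by_cases hl0 : l = 0
  · subst hl0
    by_cases hi0 : i = 0
    · simp [key, hi0]
    · simp [key, hi0, Pi.single_apply, Ne.symm hi0]
  by_cases hlj : l = j.succ
  · subst hlj
    by_cases hi0 : i = 0
    · subst hi0
      simp [key]
      omega
    · simp [key, hi0, Pi.single_apply, Ne.symm hi0]
      omega
  · by_cases hi0 : i = 0
    · simp [key, hi0, hl0, hlj]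
    · simp [key, hi0, hl0, hlj]

/-- Members of a key class are determined by their `x_0`-exponents. -/
theorem card_le_of_key {j : Fin n} {S : Finset (Fin (n+1) → ℕ)} {u : Fin (n+1) → ℕ} {t : ℕ}
    (hS : ∀ v ∈ S, key j v = u ∧ v 0 < t) : S.card ≤ t := by
  rw [← Finset.card_range t]
  refine Finset.card_le_card_of_injOn (fun v => v 0) (fun v hv => ?_) ?_
  · simpa using (hS v hv).2
  · intro v hv w hw h
    exact key_inj ((hS v hv).1.trans (hS w hw).1.symm) h

theorem keyRank_le (V : Finset (Fin (n+1) → ℕ)) (j : Fin n) (v : Fin (n+1) → ℕ) :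
    keyRank V j v ≤ v 0 :=
  card_le_of_key (j := j) (u := key j v) fun _ hw => (Finset.mem_filter.1 hw).2

theorem push_zero (V : Finset (Fin (n+1) → ℕ)) (j : Fin n) (v : Fin (n+1) → ℕ) :
    push V j v 0 = keyRank V j v := by
  simp [push]

theorem key_push (V : Finset (Fin (n+1) → ℕ)) (j : Fin n) (v : Fin (n+1) → ℕ) :
    key j (push V j v) = key j v := by
  have hr := keyRank_le V j v
  funext l
  by_cases hl0 : l = 0
  · simp [key, hl0]
  by_cases hlj : l = j.succ
  · subst hlj
    simp [key, push]
    omega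
  · simp [key, push, hl0, hlj]

theorem sum_key (j : Fin n) (v : Fin (n+1) → ℕ) : ∑ i, key j v i = ∑ i, v i := by
  have h0 : key j v 0 = 0 := by simp [key]
  have h1 : key j v j.succ = v j.succ + v 0 := by simp [key]
  have h2 : ∀ i : Fin n, i ≠ j → key j v i.succ = v i.succ := fun i hi => by
    simp [key, hi]
  rw [Fin.sum_univ_succ, Fin.sum_univ_succ, h0,
    ← Finset.add_sum_erase _ _ (Finset.mem_univ j),
    ← Finset.add_sum_erase _ (fun i : Fin n => v i.succ) (Finset.mem_univ j), h1,
    Finset.sum_congr rfl fun i hi => h2 i (Finset.ne_of_mem_erase hi)]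
  ring

theorem sum_push (V : Finset (Fin (n+1) → ℕ)) (j : Fin n) (v : Fin (n+1) → ℕ) :
    ∑ i, push V j v i = ∑ i, v i := by
  rw [← sum_key j, key_push, sum_key]

theorem keyRank_lt {V : Finset (Fin (n+1) → ℕ)} {j : Fin n} {v w : Fin (n+1) → ℕ} (hv : v ∈ V)
    (hk : key j v = key j w) (hlt : v 0 < w 0) : keyRank V j v < keyRank V j w := by
  refine Finset.card_lt_card ⟨fun x hx => ?_, fun hc => ?_⟩
  · simp only [Finset.mem_filter] at hx ⊢
    exact ⟨hx.1, hx.2.1.trans hk, hx.2.2.trans hlt⟩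
  · have := hc (Finset.mem_filter.2 ⟨hv, hk, hlt⟩)
    simp at this

theorem push_injOn (V : Finset (Fin (n+1) → ℕ)) (j : Fin n) : Set.InjOn (push V j) V := by
  intro v hv w hw h
  have hk : key j v = key j w := by rw [← key_push V, h, key_push]
  have hr : keyRank V j v = keyRank V j w := by rw [← push_zero, h, push_zero]
  refine key_inj hk ?_
  rcases lt_trichotomy (v 0) (w 0) with hlt | heq | hlt
  · have := keyRank_lt hv hk hlt
    omega
  · exact heq
  · have := keyRank_lt hw hk.symm hlt
    omega

theorem keyRank_lt_card {V : Finset (Fin (n+1) → ℕ)} {j : Fin n} {v : Fin (n+1) → ℕ} (hv : v ∈ V) :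
    keyRank V j v < (V.filter fun w => key j w = key j v).card := by
  refine Finset.card_lt_card ⟨fun x hx => ?_, fun hc => ?_⟩
  · simp only [Finset.mem_filter] at hx ⊢
    exact ⟨hx.1, hx.2.1⟩
  · have := hc (Finset.mem_filter.2 ⟨hv, rfl⟩)
    simp at this

/-- A key class of `V` with `c` elements spreads to `c` elements of `MV` under multiplication
by `x_i`, and to `c + 1` elements under multiplication by `x_0` and `x_j` together. -/
theorem card_key_shad {V : Finset (Fin (n+1) → ℕ)} {j : Fin n} {v : Fin (n+1) → ℕ} (hv : v ∈ V)
    (i : Fin (n+1)) :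
    (V.filter fun w => key j w = key j v).card + (if i = 0 then 1 else 0) ≤
      ((shad V).filter fun w => key j w = key j (v + Pi.single i 1)).card := by
  set A := V.filter fun w => key j w = key j v with hA
  have hAi : ∀ l : Fin (n+1), (if l = 0 then j.succ else l) = (if i = 0 then j.succ else i) →
      ∀ w ∈ A, w + Pi.single l 1 ∈
        (shad V).filter fun w => key j w = key j (v + Pi.single i 1) := by
    intro l hl w hw
    rw [hA, Finset.mem_filter] at hw
    rw [Finset.mem_filter]
    exact ⟨mem_shad.2 ⟨l, w, hw.1, rfl⟩, by rw [key_add, key_add, hl, hw.2]⟩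
  have hinj : ∀ l : Fin (n+1), (A.image fun w => w + Pi.single l 1).card = A.card := fun l =>
    Finset.card_image_of_injective _ (add_left_injective _)
  by_cases hi : i = 0
  · -- The multiple by `x_0` of the member with largest `x_0`-exponent is no multiple by `x_j`
    -- of a member.
    obtain ⟨m, hm, hmax⟩ := Finset.exists_max_image A (fun w => w 0)
      ⟨v, Finset.mem_filter.2 ⟨hv, rfl⟩⟩
    have hnot : m + Pi.single 0 1 ∉ A.image fun w => w + Pi.single j.succ 1 := by
      intro hc
      obtain ⟨w, hw, he⟩ := Finset.mem_image.1 hc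
      have h0 := congrFun he 0
      simp [Ne.symm (Fin.succ_ne_zero j)] at h0
      have := hmax w hw
      omega
    rw [if_pos hi, ← hinj j.succ, ← Finset.card_insert_of_notMem hnot]
    refine Finset.card_le_card fun x hx => ?_
    rcases Finset.mem_insert.1 hx with rfl | hx
    · exact hAi 0 (by simp [hi]) m hm
    · obtain ⟨w, hw, rfl⟩ := Finset.mem_image.1 hx
      exact hAi j.succ (by simp [hi]) w hw
  · rw [if_neg hi, add_zero, ← hinj i]
    refine Finset.card_le_card fun x hx => ?_
    obtain ⟨w, hw, rfl⟩ := Finset.mem_image.1 hx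
    exact hAi i rfl w hw

/-- Compression does not enlarge `MV`. -/
theorem card_shad_push_le (V : Finset (Fin (n+1) → ℕ)) (j : Fin n) :
    (shad (V.image (push V j))).card ≤ (shad V).card := by
  set W := shad (V.image (push V j)) with hW
  have hlt : ∀ w ∈ W, w 0 < ((shad V).filter fun x => key j x = key j w).card := by
    intro w hw
    obtain ⟨i, p, hp, rfl⟩ := mem_shad.1 hw
    obtain ⟨v, hv, rfl⟩ := Finset.mem_image.1 hp
    have h1 := keyRank_lt_card (j := j) hv
    have h2 := card_key_shad (j := j) hv i
    rw [key_add, key_push, ← key_add]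
    simp only [Pi.add_apply, push_zero, Pi.single_apply, eq_comm (a := (0 : Fin (n+1)))]
    omega
  rw [Finset.card_eq_sum_card_fiberwise (f := key j) (s := W) (t := (W ∪ shad V).image (key j))
      (fun x hx => Finset.mem_coe.2 (Finset.mem_image_of_mem _ (Finset.mem_union_left _ hx))),
    Finset.card_eq_sum_card_fiberwise (f := key j) (s := shad V)
      (t := (W ∪ shad V).image (key j))
      (fun x hx => Finset.mem_coe.2 (Finset.mem_image_of_mem _ (Finset.mem_union_right _ hx)))]
  refine Finset.sum_le_sum fun u _ => card_le_of_key (j := j) (u := u) fun w hw => ?_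
  rw [Finset.mem_filter] at hw
  exact ⟨hw.2, hw.2 ▸ hlt w hw.1⟩

/-- Every `V` can be replaced by a set of the same size and degree, with `MV` no larger, that is
closed under the moves `x_0 m ↦ x_j m`. -/
theorem exists_stable {d : ℕ} (V : Finset (Fin (n+1) → ℕ)) (hdeg : ∀ v ∈ V, ∑ i, v i = d) :
    ∃ W : Finset (Fin (n+1) → ℕ), (∀ v ∈ W, ∑ i, v i = d) ∧ W.card = V.card ∧
      (shad W).card ≤ (shad V).card ∧
      ∀ (m : Fin (n+1) → ℕ) (j : Fin n), m + Pi.single 0 1 ∈ W → m + Pi.single j.succ 1 ∈ W := by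
  -- Each compression that acts nontrivially lowers the total `x_0`-exponent.
  induction hN : ∑ v ∈ V, v 0 using Nat.strong_induction_on generalizing V with
  | _ N ih =>
  by_cases hst : ∀ (m : Fin (n+1) → ℕ) (j : Fin n), m + Pi.single 0 1 ∈ V → m + Pi.single j.succ 1 ∈ V
  · exact ⟨V, hdeg, rfl, le_rfl, hst⟩
  push Not at hst
  obtain ⟨m, j, hm, hmj⟩ := hst
  have hinj := push_injOn V j
  have hlt : ∑ v ∈ V.image (push V j), v 0 < N := by
    rw [Finset.sum_image hinj, ← hN]
    refine Finset.sum_lt_sum (fun v _ => by rw [push_zero]; exact keyRank_le V j v) ⟨_, hm, ?_⟩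
    rw [push_zero]
    -- The exponent `m 0` is missing below `m 0 + 1`, so all smaller members lie below `m 0`.
    have : keyRank V j (m + Pi.single 0 1) ≤ m 0 := by
      refine card_le_of_key (j := j) (u := key j (m + Pi.single 0 1)) fun w hw => ?_
      obtain ⟨hwV, hk, h0⟩ := Finset.mem_filter.1 hw
      refine ⟨hk, ?_⟩
      simp only [Pi.add_apply, Pi.single_eq_same] at h0
      refine lt_of_le_of_ne (by omega) fun he => hmj ?_
      have : w = m + Pi.single j.succ 1 := by
        refine key_inj (j := j) ?_ ?_
        · rw [hk, key_add, key_add]; simp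
        · simp [he, Ne.symm (Fin.succ_ne_zero j)]
      rwa [← this]
    simp only [Pi.add_apply, Pi.single_eq_same]
    omega
  obtain ⟨W, h1, h2, h3, h4⟩ := ih _ hlt (V.image (push V j)) (fun v hv => by
    obtain ⟨w, hw, rfl⟩ := Finset.mem_image.1 hv
    rw [sum_push, hdeg w hw]) rfl
  exact ⟨W, h1, h2.trans (Finset.card_image_of_injOn hinj),
    h3.trans (card_shad_push_le V j), h4⟩

end Compression

/-! ### The double induction -/

/-- Splitting by divisibility by `x_0`: a subset `A` of `K[x_1, …, x_n]` inside `V`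
contributes `MA` (taken in those variables) to `MV`, disjointly from `x_0 V`. -/
theorem card_add_card_shad_le {n : ℕ} {V : Finset (Fin (n+1) → ℕ)} {A : Finset (Fin n → ℕ)}
    (hA : ∀ a ∈ A, (Fin.cons 0 a : Fin (n+1) → ℕ) ∈ V) :
    V.card + (shad A).card ≤ (shad V).card := by
  have hcons : Function.Injective fun a : Fin n → ℕ => (Fin.cons 0 a : Fin (n+1) → ℕ) :=
    fun a b h => (Fin.cons_inj.1 h).2
  rw [← Finset.card_image_of_injective V (add_left_injective (Pi.single (0 : Fin (n+1)) 1)),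
    ← Finset.card_image_of_injective (shad A) hcons, ← Finset.card_union_of_disjoint]
  · refine Finset.card_le_card (Finset.union_subset ?_ ?_)
    · intro x hx
      obtain ⟨v, hv, rfl⟩ := Finset.mem_image.1 hx
      exact mem_shad.2 ⟨0, v, hv, rfl⟩
    · intro x hx
      obtain ⟨b, hb, rfl⟩ := Finset.mem_image.1 hx
      obtain ⟨i, a, ha, rfl⟩ := mem_shad.1 hb
      refine mem_shad.2 ⟨i.succ, _, hA a ha, ?_⟩
      funext l
      refine Fin.cases ?_ (fun l => ?_) l
      · simp [Ne.symm (Fin.succ_ne_zero i)]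
      · simp [Pi.single_apply]
  · rw [Finset.disjoint_left]
    intro x hx hy
    obtain ⟨v, _, rfl⟩ := Finset.mem_image.1 hx
    obtain ⟨b, _, h⟩ := Finset.mem_image.1 hy
    have := congrFun h 0
    simp at this

theorem macaulay_aux (k d : ℕ) (V : Finset (Fin (k+1) → ℕ)) (hdeg : ∀ v ∈ V, ∑ i, v i = d) :
    macUp k V.card ≤ (shad V).card := by
  induction k generalizing d with
  | zero =>
    have := card_add_card_shad_le (V := V) (A := ∅) (by simp)
    simp only [macUp]
    omega
  | succ k ihk =>
    induction d using Nat.strong_induction_on generalizing V with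
    | _ d ihd =>
    obtain ⟨W, hW, hcard, hshad, hst⟩ := exists_stable V hdeg
    rw [← hcard]
    refine le_trans ?_ hshad
    -- `W` is the disjoint union of `A` (monomials not involving `x_0`) and `x_0 B`.
    let A : Finset (Fin (k+1) → ℕ) := (W.filter fun v => v 0 = 0).image Fin.tail
    let B : Finset (Fin (k+1+1) → ℕ) :=
      (W.filter fun v => ¬ v 0 = 0).image fun v => v - Pi.single 0 1
    have hcons : ∀ v ∈ W.filter fun v => v 0 = 0,
        (Fin.cons 0 (Fin.tail v) : Fin (k+1+1) → ℕ) = v := fun v hv => by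
      rw [← (Finset.mem_filter.1 hv).2]; exact Fin.cons_self_tail v
    have hsub : ∀ v ∈ W.filter fun v => ¬ v 0 = 0,
        v - Pi.single 0 1 + Pi.single 0 1 = v := fun v hv => by
      have h0 := (Finset.mem_filter.1 hv).2
      funext i
      by_cases hi : i = 0
      · subst hi
        simp
        omega
      · simp [hi]
    have hA : ∀ a ∈ A, (Fin.cons 0 a : Fin (k+1+1) → ℕ) ∈ W := fun a ha => by
      obtain ⟨v, hv, rfl⟩ := Finset.mem_image.1 ha
      rw [hcons v hv]
      exact (Finset.mem_filter.1 hv).1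
    have hB : ∀ b ∈ B, b + Pi.single 0 1 ∈ W := fun b hb => by
      obtain ⟨v, hv, rfl⟩ := Finset.mem_image.1 hb
      simp only [hsub v hv]
      exact (Finset.mem_filter.1 hv).1
    have hAB : A.card + B.card = W.card := by
      rw [Finset.card_image_of_injOn, Finset.card_image_of_injOn]
      · exact Finset.card_filter_add_card_filter_not _
      · intro v hv w hw h
        rw [← hsub v hv, ← hsub w hw]
        exact congrArg (· + Pi.single 0 1) h
      · intro v hv w hw h
        rw [← hcons v hv, ← hcons w hw, h]
    -- Stability puts `MB` inside `W`.
    have hBW : shad B ⊆ W := fun x hx => by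
      obtain ⟨i, b, hb, rfl⟩ := mem_shad.1 hx
      refine Fin.cases (hB b hb) (fun j => hst b j (hB b hb)) i
    have hBdeg : ∀ b ∈ B, (∑ i, b i) + 1 = d := fun b hb => by
      rw [← hW _ (hB b hb)]
      simp [Finset.sum_add_distrib]
    have hAdeg : ∀ a ∈ A, ∑ i, a i = d := fun a ha => by
      simpa [Fin.sum_univ_succ] using hW _ (hA a ha)
    have hq : macUp (k+1) B.card ≤ W.card := by
      cases d with
      | zero =>
        have : B = ∅ := Finset.eq_empty_of_forall_notMem fun b hb => by
          have := hBdeg b hb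
          omega
        simp [this, macUp_zero_right]
      | succ d =>
        exact (ihd d (Nat.lt_succ_self d) B fun b hb => by
          have := hBdeg b hb
          omega).trans (Finset.card_le_card hBW)
    have h1 := macUp_succ_le hq
    rw [show W.card - B.card = A.card by omega] at h1
    have h2 := ihk d A hAdeg
    have h3 := card_add_card_shad_le hA
    omega

/-- **Macaulay's bound**: for every set `V` of monomials of degree `d` in
`K[x_1,…,x_n]` one has `|MV| ≥ |V|^{<n-1>}`. -/
theorem macaulay_bound {n d : ℕ} (hn : 0 < n) (V : Finset (Fin n → ℕ))
    (hdeg : ∀ v ∈ V, ∑ i, v i = d) :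
    macUp (n - 1) V.card ≤ (shad V).card := by
  obtain ⟨k, rfl⟩ : ∃ k, n = k + 1 := ⟨n - 1, by omega⟩
  exact macaulay_aux k d V hdeg
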